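/- Let ϑ, ϑ₁, ϑ₂ be Beurling weights on ℝ^d and 1 < p, q, r < ∞. Assume ϑ ≺ ϑ₁ and that ϑ(x)/ϑ₁(x) does not tend to zero as |x| → ∞. Then A^{p,1,q,r}_{ϑ₁,ϑ₂}(ℝ^d) ⊆ (L^p_ϑ, ℓ¹) and the inclusion map from A^{p,1,q,r}_{ϑ₁,ϑ₂}(ℝ^d) into (L^p_ϑ, ℓ¹) is never a compact operator: there exists a sequence bounded in ‖·‖_A having no subsequence that converges in the norm ‖·‖_{p1,ϑ}. -/

import Mathlib

open MeasureTheory Filter Topology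
open scoped ENNReal NNReal BigOperators

noncomputable section

/-- The unit cube `α + [0,1)^d` at the integer point `α ∈ ℤ^d`. -/
def cube {d : ℕ} (α : Fin d → ℤ) : Set (Fin d → ℝ) :=
  Set.univ.pi fun i => Set.Ico (α i : ℝ) ((α i : ℝ) + 1)

/-- The weighted amalgam norm `‖f‖_{pq,ω}` of the space `(L^p_ω, ℓ^q)`. -/
def amalgamNorm {d : ℕ} (p q : ℝ) (ω : (Fin d → ℝ) → ℝ) (f : (Fin d → ℝ) → ℂ) : ℝ≥0∞ :=
  (∑' α : Fin d → ℤ,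
      (eLpNorm (fun x => ω x • f x) (ENNReal.ofReal p) (volume.restrict (cube α))) ^ q) ^ (1 / q)

/-- Membership in the weighted amalgam space `(L^p_ω, ℓ^q)`. -/
def MemAmalgam {d : ℕ} (p q : ℝ) (ω : (Fin d → ℝ) → ℝ) (f : (Fin d → ℝ) → ℂ) : Prop :=
  Measurable f ∧ amalgamNorm p q ω f < ⊤

/-- A Beurling weight: measurable, `ϑ ≥ 1` and submultiplicative. -/
def IsBeurling {d : ℕ} (ϑ : (Fin d → ℝ) → ℝ) : Prop :=
  Measurable ϑ ∧ (∀ x, 1 ≤ ϑ x) ∧ ∀ x y, ϑ (x + y) ≤ ϑ x * ϑ y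

/-- The Fourier transform `f̂(ξ) = ∫ f(x) e^{-2πi⟨x,ξ⟩} dx`. -/
def fourierT {d : ℕ} (f : (Fin d → ℝ) → ℂ) (ξ : Fin d → ℝ) : ℂ :=
  ∫ x : Fin d → ℝ,
    Complex.exp (-(2 * (Real.pi : ℂ) * Complex.I * ∑ i, (x i : ℂ) * (ξ i : ℂ))) * f x

/-- The norm of `A^{p,1,q,r}_{ϑ₁,ϑ₂}(ℝ^d)`. -/
def ANorm {d : ℕ} (p q r : ℝ) (ϑ₁ ϑ₂ : (Fin d → ℝ) → ℝ) (f : (Fin d → ℝ) → ℂ) : ℝ≥0∞ :=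
  amalgamNorm p 1 ϑ₁ f + amalgamNorm q r ϑ₂ (fourierT f)

/-- Membership in `A^{p,1,q,r}_{ϑ₁,ϑ₂}(ℝ^d)`. -/
def MemA {d : ℕ} (p q r : ℝ) (ϑ₁ ϑ₂ : (Fin d → ℝ) → ℝ) (f : (Fin d → ℝ) → ℂ) : Prop :=
  MemAmalgam p 1 ϑ₁ f ∧ MemAmalgam q r ϑ₂ (fourierT f)

/-- Convolution `(f∗g)(x) = ∫ f(x−t)g(t) dt`. -/
def convF {d : ℕ} (f g : (Fin d → ℝ) → ℂ) (x : Fin d → ℝ) : ℂ :=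
  ∫ t : Fin d → ℝ, f (x - t) * g t

/-- `ϑ ≺ ϑ'` : domination of weights up to a constant. -/
def Prec {d : ℕ} (ϑ ϑ' : (Fin d → ℝ) → ℝ) : Prop :=
  ∃ C : ℝ, 0 < C ∧ ∀ x, ϑ x ≤ C * ϑ' x

/-- The Beurling–Domar condition `∑_{n≥1} log ϑ(nx)/n² < ∞`. -/
def BeurlingDomar {d : ℕ} (ϑ : (Fin d → ℝ) → ℝ) : Prop :=
  ∀ x : Fin d → ℝ, Summable fun n : ℕ => Real.log (ϑ ((n : ℝ) • x)) / (n : ℝ) ^ 2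

/-- `w` does not tend to zero as `|x| → ∞`. -/
def NotVanishingAtInfty {d : ℕ} (w : (Fin d → ℝ) → ℝ) : Prop :=
  ∃ δ : ℝ, 0 < δ ∧ ∀ R : ℝ, 0 < R → ∃ x : Fin d → ℝ, R < ‖x‖ ∧ δ ≤ w x

end

theorem aux_volume_cube {d : ℕ} (α : Fin d → ℤ) : volume (cube α) = 1 := by
  unfold cube
  rw [Real.volume_pi_Ico]
  simp

theorem aux_measurableSet_cube {d : ℕ} (α : Fin d → ℤ) : MeasurableSet (cube α) :=
  MeasurableSet.univ_pi fun _ => measurableSet_Ico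

theorem aux_sum_abs {d : ℕ} (x : Fin d → ℝ) : ‖x‖ ≤ ∑ i, |x i| := by
  rw [pi_norm_le_iff_of_nonneg (Finset.sum_nonneg fun i _ => abs_nonneg _)]
  intro i
  exact Finset.single_le_sum (f := fun i => |x i|) (fun i _ => abs_nonneg _) (Finset.mem_univ i)

theorem aux_nsmul {d : ℕ} {ϑ : (Fin d → ℝ) → ℝ} (h : IsBeurling ϑ) (x : Fin d → ℝ) (n : ℕ) :
    ϑ ((n + 1) • x) ≤ ϑ x ^ (n + 1) := by
  induction n with
  | zero => simp
  | succ n ih =>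
    rw [succ_nsmul, pow_succ]
    refine (h.2.2 _ _).trans ?_
    exact mul_le_mul_of_nonneg_right ih (by linarith [h.2.1 x])

/-- Beurling weights grow at most exponentially (and are locally bounded). -/
theorem aux_bound {d : ℕ} {ϑ : (Fin d → ℝ) → ℝ} (h : IsBeurling ϑ) :
    ∃ A B : ℝ, 0 < A ∧ 0 ≤ B ∧ ∀ x, ϑ x ≤ A * Real.exp (B * ∑ i, |x i|) := by
  let E : ℕ → Set (Fin d → ℝ) := fun N => {x | ϑ x ≤ N ∧ ϑ (-x) ≤ N}
  have hE : ∀ N, MeasurableSet (E N) := fun N =>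
    (measurableSet_le h.1 measurable_const).inter
      (measurableSet_le (h.1.comp measurable_neg) measurable_const)
  have hU : (⋃ N, E N) = Set.univ := by
    ext x
    simp only [Set.mem_iUnion, Set.mem_univ, iff_true]
    obtain ⟨N, hN⟩ := exists_nat_ge (max (ϑ x) (ϑ (-x)))
    exact ⟨N, (le_max_left _ _).trans hN, (le_max_right _ _).trans hN⟩
  obtain ⟨N, hN⟩ := exists_measure_pos_of_not_measure_iUnion_null
    (μ := (volume : Measure (Fin d → ℝ))) (s := E) (by
      rw [hU]
      exact (Measure.measure_univ_ne_zero).2 (NeZero.ne _))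
  have hn := Measure.sub_mem_nhds_zero_of_addHaar_pos volume (E N) (hE N) hN
  obtain ⟨ε, hε, hb⟩ := Metric.mem_nhds_iff.1 hn
  have hsmall : ∀ x, ‖x‖ < ε → ϑ x ≤ (N : ℝ) * N := by
    intro x hx
    have := hb (show x ∈ Metric.ball 0 ε by simpa using hx)
    obtain ⟨y, hy, z, hz, rfl⟩ := Set.mem_sub.1 this
    rw [sub_eq_add_neg]
    refine (h.2.2 _ _).trans (mul_le_mul hy.1 hz.2 (by linarith [h.2.1 (-z)]) (Nat.cast_nonneg N))
  set K : ℝ := (N : ℝ) * N with hK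
  have hK1 : 1 ≤ K := (h.2.1 0).trans (hsmall 0 (by simpa using hε))
  have hK0 : 0 < K := by linarith
  have hlog : 0 ≤ Real.log K := Real.log_nonneg hK1
  refine ⟨K, Real.log K / ε, hK0, by positivity, fun x => ?_⟩
  set m := ⌊‖x‖ / ε⌋₊ with hm
  have hm1 : ‖x‖ / ε < m + 1 := Nat.lt_floor_add_one _
  have hm2 : (m : ℝ) ≤ ‖x‖ / ε := Nat.floor_le (by positivity)
  have hm0 : (0 : ℝ) < (m : ℝ) + 1 := by positivity
  have hx : x = (m + 1) • (((m : ℝ) + 1)⁻¹ • x) := by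
    rw [← Nat.cast_smul_eq_nsmul ℝ, smul_smul]
    push_cast
    rw [mul_inv_cancel₀ hm0.ne', one_smul]
  have hs : ϑ (((m : ℝ) + 1)⁻¹ • x) ≤ K := by
    apply hsmall
    rw [norm_smul, norm_inv, Real.norm_of_nonneg hm0.le, inv_mul_lt_iff₀ hm0]
    rwa [div_lt_iff₀ hε] at hm1
  have h1 : ϑ x ≤ K ^ (m + 1) := by
    conv_lhs => rw [hx]
    exact (aux_nsmul h _ m).trans (pow_le_pow_left₀ (by linarith [h.2.1 (((m : ℝ) + 1)⁻¹ • x)]) hs _)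
  refine h1.trans ?_
  rw [pow_succ, mul_comm]
  refine mul_le_mul_of_nonneg_left ?_ hK0.le
  rw [← Real.exp_log hK0, ← Real.exp_nat_mul, Real.exp_log hK0]
  apply Real.exp_le_exp.2
  calc (m : ℝ) * Real.log K ≤ (‖x‖ / ε) * Real.log K := by gcongr
    _ = Real.log K / ε * ‖x‖ := by ring
    _ ≤ _ := by gcongr; exact aux_sum_abs x

/-- The one-dimensional sum `∑ e^{-|k|}`. -/
noncomputable def auxS : ℝ≥0∞ := ∑' k : ℤ, ENNReal.ofReal (Real.exp (-|(k : ℝ)|))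

theorem auxS_lt_top : auxS < ⊤ := by
  have : Summable fun k : ℤ => Real.exp (-|(k : ℝ)|) := by
    apply Summable.of_nat_of_neg <;> simpa using Real.summable_exp_neg_nat
  exact this.tsum_ofReal_lt_top

theorem aux_tsum_pi {d : ℕ} (u : Fin d → ℤ → ℝ≥0∞) :
    ∑' α : Fin d → ℤ, ∏ i, u i (α i) ≤ ∏ i, ∑' k, u i k := by
  rw [ENNReal.tsum_eq_iSup_sum]
  refine iSup_le fun s => ?_
  calc ∑ α ∈ s, ∏ i, u i (α i)
      ≤ ∑ α ∈ Fintype.piFinset (fun i => s.image (fun α => α i)), ∏ i, u i (α i) := by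
        apply Finset.sum_le_sum_of_subset
        intro α hα
        rw [Fintype.mem_piFinset]
        intro i
        exact Finset.mem_image_of_mem _ hα
    _ = ∏ i, ∑ k ∈ s.image (fun α => α i), u i k := (Finset.prod_univ_sum _ _).symm
    _ ≤ _ := Finset.prod_le_prod' fun i _ => ENNReal.sum_le_tsum _

theorem aux_amalgam {d : ℕ} (p q : ℝ) (hq : 1 ≤ q) (ω : (Fin d → ℝ) → ℝ)
    (f : (Fin d → ℝ) → ℂ) (A : ℝ) (hA : 0 ≤ A) (a : Fin d → ℤ)
    (hf : ∀ α, ∀ x ∈ cube α, ‖ω x • f x‖ ≤ A * ∏ i, Real.exp (-|(α i : ℝ) - a i|)) :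
    amalgamNorm p q ω f ≤ (ENNReal.ofReal A ^ q * auxS ^ d) ^ (1 / q) := by
  unfold amalgamNorm
  have hq0 : 0 ≤ q := by linarith
  refine ENNReal.rpow_le_rpow ?_ (by positivity)
  calc _ ≤ ∑' α : Fin d → ℤ, ENNReal.ofReal A ^ q *
        ∏ i, ENNReal.ofReal (Real.exp (-|(α i : ℝ) - a i|)) := by
        refine ENNReal.tsum_le_tsum fun α => ?_
        have h1 := eLpNorm_le_of_ae_bound (p := ENNReal.ofReal p) (μ := volume.restrict (cube α))
          (f := fun x => ω x • f x) (C := A * ∏ i, Real.exp (-|(α i : ℝ) - a i|))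
          ((ae_restrict_mem (aux_measurableSet_cube α)).mono fun x hx => hf α x hx)
        rw [Measure.restrict_apply_univ, aux_volume_cube, ENNReal.one_rpow, one_mul] at h1
        refine (ENNReal.rpow_le_rpow h1 hq0).trans ?_
        rw [ENNReal.ofReal_mul hA, ENNReal.mul_rpow_of_nonneg _ _ hq0]
        refine mul_le_mul_right ?_ _
        rw [ENNReal.ofReal_prod_of_nonneg fun i _ => (Real.exp_pos _).le]
        refine ENNReal.rpow_le_self_of_le_one ?_ hq
        refine Finset.prod_le_one' fun i _ => ?_
        rw [ENNReal.ofReal_le_one, Real.exp_le_one_iff]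
        simp
    _ = ENNReal.ofReal A ^ q * ∑' α : Fin d → ℤ,
        ∏ i, ENNReal.ofReal (Real.exp (-|(α i : ℝ) - a i|)) := ENNReal.tsum_mul_left
    _ ≤ ENNReal.ofReal A ^ q * ∏ i, ∑' k : ℤ, ENNReal.ofReal (Real.exp (-|(k : ℝ) - a i|)) := by
        gcongr
        exact aux_tsum_pi (fun i k => ENNReal.ofReal (Real.exp (-|(k : ℝ) - a i|)))
    _ = _ := by
        have : ∀ i, ∑' k : ℤ, ENNReal.ofReal (Real.exp (-|(k : ℝ) - a i|)) = auxS := by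
          intro i
          rw [auxS, ← (Equiv.addRight (a i)).tsum_eq]
          simp
        simp [this]

/-- The translated Gaussian. -/
noncomputable def auxG {d : ℕ} (a : Fin d → ℤ) (x : Fin d → ℝ) : ℝ :=
  Real.exp (-(Real.pi * ∑ i, (x i - a i) ^ 2))

theorem aux_pointwise {d : ℕ} (A B : ℝ) (hA : 0 ≤ A) (a α : Fin d → ℤ)
    (x : Fin d → ℝ) (hx : x ∈ cube α) :
    A * Real.exp (B * ∑ i, |x i - a i|) * auxG a x ≤
      A * Real.exp ((B + 1) ^ 2 + 1) ^ d * ∏ i, Real.exp (-|(α i : ℝ) - a i|) := by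
  have e : Real.exp ((B + 1) ^ 2 + 1) ^ d = ∏ _i : Fin d, Real.exp ((B + 1) ^ 2 + 1) := by simp
  rw [e, mul_assoc, mul_assoc, ← Finset.prod_mul_distrib]
  refine mul_le_mul_of_nonneg_left ?_ hA
  unfold auxG
  rw [← Real.exp_add, Finset.mul_sum, Finset.mul_sum, ← sub_eq_add_neg, ← Finset.sum_sub_distrib,
    Real.exp_sum]
  refine Finset.prod_le_prod (fun i _ => (Real.exp_pos _).le) fun i _ => ?_
  rw [← Real.exp_add]
  apply Real.exp_le_exp.2
  have h := hx i (Set.mem_univ i)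
  simp only [Set.mem_Ico] at h
  have h3 : |(α i : ℝ) - a i| ≤ |x i - a i| + 1 := by
    have : (α i : ℝ) - a i = (x i - a i) + (α i - x i) := by ring
    rw [this]
    refine (abs_add_le _ _).trans ?_
    gcongr
    rw [abs_le]; constructor <;> linarith
  have hpi := Real.pi_gt_three
  rw [← sq_abs (x i - a i)]
  nlinarith [sq_nonneg (|x i - a i| - (B + 1)), sq_nonneg (|x i - a i|)]

theorem aux_fourier {d : ℕ} (a : Fin d → ℤ) (c : ℝ) (ξ : Fin d → ℝ) :
    fourierT (fun x => (c : ℂ) * (auxG a x : ℂ)) ξ =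
      c * Complex.exp (∑ i, (-Real.pi * (ξ i : ℂ) ^ 2 - 2 * Real.pi * Complex.I * a i * ξ i)) := by
  unfold fourierT auxG
  have hpi : (Real.pi : ℂ) ≠ 0 := by exact_mod_cast Real.pi_ne_zero
  have h := GaussianFourier.integral_cexp_neg_mul_sum_add (b := (Real.pi : ℂ)) (ι := Fin d)
    (by simpa using Real.pi_pos) (fun i => 2 * Real.pi * a i - 2 * Real.pi * Complex.I * ξ i)
  rw [div_self hpi, Complex.one_cpow, one_mul] at h
  calc _ = ∫ x : Fin d → ℝ, (c * Complex.exp (-Real.pi * ∑ i, (a i : ℂ) ^ 2)) *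
        Complex.exp (-Real.pi * ∑ i, (x i : ℂ) ^ 2 +
          ∑ i, (2 * Real.pi * a i - 2 * Real.pi * Complex.I * ξ i) * x i) := by
        congr 1
        ext x
        push_cast
        rw [mul_left_comm, mul_assoc (c : ℂ), ← Complex.exp_add, ← Complex.exp_add]
        congr 2
        simp only [Finset.mul_sum, ← Finset.sum_add_distrib, ← Finset.sum_neg_distrib]
        refine Finset.sum_congr rfl fun i _ => ?_
        ring
    _ = _ := by
        rw [integral_const_mul, h, mul_assoc, ← Complex.exp_add]
        congr 2
        simp only [Finset.mul_sum, Finset.sum_div, ← Finset.sum_add_distrib]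
        refine Finset.sum_congr rfl fun i _ => ?_
        field_simp
        ring_nf
        simp only [Complex.I_sq]
        ring

theorem aux_fourier_norm {d : ℕ} (a : Fin d → ℤ) (c : ℝ) (ξ : Fin d → ℝ) :
    ‖fourierT (fun x => (c : ℂ) * (auxG a x : ℂ)) ξ‖ = |c| * auxG 0 ξ := by
  rw [aux_fourier, norm_mul, Complex.norm_real, Complex.norm_exp, Real.norm_eq_abs]
  unfold auxG
  congr 2
  rw [Complex.re_sum, Finset.mul_sum, ← Finset.sum_neg_distrib]
  refine Finset.sum_congr rfl fun i _ => ?_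
  simp [← Complex.ofReal_pow]

theorem aux_fourier_meas {d : ℕ} (a : Fin d → ℤ) (c : ℝ) :
    Measurable (fourierT (fun x => (c : ℂ) * (auxG a x : ℂ))) := by
  have : fourierT (fun x => (c : ℂ) * (auxG a x : ℂ)) = fun ξ =>
      c * Complex.exp (∑ i, (-Real.pi * (ξ i : ℂ) ^ 2 - 2 * Real.pi * Complex.I * a i * ξ i)) :=
    funext (aux_fourier a c)
  rw [this]
  fun_prop

theorem aux_G_meas {d : ℕ} (a : Fin d → ℤ) (c : ℝ) :
    Measurable (fun x => (c : ℂ) * (auxG a x : ℂ)) := by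
  unfold auxG
  fun_prop

theorem aux_unit {d : ℕ} {ϑ : (Fin d → ℝ) → ℝ} (h : IsBeurling ϑ) :
    ∃ M : ℝ, 0 < M ∧ ∀ t : Fin d → ℝ, (∀ i, |t i| ≤ 1) → ϑ t ≤ M := by
  obtain ⟨A, B, hA, hB, hb⟩ := aux_bound h
  refine ⟨A * Real.exp (B * d), by positivity, fun t ht => (hb t).trans ?_⟩
  gcongr
  refine (Finset.sum_le_sum fun i _ => ht i).trans ?_
  simp

/-- The real vector of an integer vector. -/
noncomputable def auxC {d : ℕ} (a : Fin d → ℤ) : Fin d → ℝ := fun i => (a i : ℝ)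

theorem aux_infinite {d : ℕ} {ϑ ϑ₁ : (Fin d → ℝ) → ℝ} (hϑ : IsBeurling ϑ) (h1 : IsBeurling ϑ₁)
    (hnv : NotVanishingAtInfty (fun x => ϑ x / ϑ₁ x)) :
    ∃ δ : ℝ, 0 < δ ∧ {a : Fin d → ℤ | δ * ϑ₁ (auxC a) ≤ ϑ (auxC a)}.Infinite := by
  obtain ⟨δ, hδ, hR⟩ := hnv
  obtain ⟨M, hM, hMb⟩ := aux_unit hϑ
  obtain ⟨M1, hM1, hM1b⟩ := aux_unit h1
  refine ⟨δ / (M * M1), by positivity, fun hfin => ?_⟩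
  obtain ⟨R, hRb⟩ := (hfin.image fun a => ‖auxC a‖).bddAbove
  obtain ⟨x, hx, hxδ⟩ := hR (max R 0 + 1) (by positivity)
  set a : Fin d → ℤ := fun i => ⌊x i⌋ with ha
  have ht : ∀ i, |(x - auxC a) i| ≤ 1 := by
    intro i
    simp only [Pi.sub_apply, auxC, ha]
    rw [abs_le]
    constructor <;> linarith [Int.floor_le (x i), Int.lt_floor_add_one (x i)]
  have ht' : ∀ i, |(-(x - auxC a)) i| ≤ 1 := by
    intro i
    rw [Pi.neg_apply, abs_neg]
    exact ht i
  have e1 : ϑ x ≤ ϑ (auxC a) * M := by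
    have h := hϑ.2.2 (auxC a) (x - auxC a)
    rw [add_sub_cancel] at h
    exact h.trans (mul_le_mul_of_nonneg_left (hMb _ ht) (by linarith [hϑ.2.1 (auxC a)]))
  have e2 : ϑ₁ (auxC a) ≤ ϑ₁ x * M1 := by
    have h := h1.2.2 x (-(x - auxC a))
    rw [show x + -(x - auxC a) = auxC a by abel] at h
    exact h.trans (mul_le_mul_of_nonneg_left (hM1b _ ht') (by linarith [h1.2.1 x]))
  have e3 : δ * ϑ₁ x ≤ ϑ x := by
    rwa [le_div_iff₀ (by linarith [h1.2.1 x])] at hxδ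
  have hmem : a ∈ {a : Fin d → ℤ | δ / (M * M1) * ϑ₁ (auxC a) ≤ ϑ (auxC a)} := by
    rw [Set.mem_ofPred_eq, div_mul_eq_mul_div, div_le_iff₀ (by positivity)]
    calc δ * ϑ₁ (auxC a) ≤ δ * (ϑ₁ x * M1) := by gcongr
      _ = (δ * ϑ₁ x) * M1 := by ring
      _ ≤ (ϑ (auxC a) * M) * M1 := mul_le_mul_of_nonneg_right (e3.trans e1) hM1.le
      _ = _ := by ring
  have h3 : ‖auxC a‖ ≤ R := hRb (Set.mem_image_of_mem _ hmem)
  have h4 : ‖x - auxC a‖ ≤ 1 := (pi_norm_le_iff_of_nonneg zero_le_one).2 ht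
  have h5 : ‖x‖ ≤ ‖auxC a‖ + ‖x - auxC a‖ := norm_le_insert' x (auxC a)
  linarith [le_max_left R 0]

theorem aux_G_pos {d : ℕ} (a : Fin d → ℤ) (x : Fin d → ℝ) : 0 < auxG a x := Real.exp_pos _

theorem aux_G_lower {d : ℕ} (a : Fin d → ℤ) (x : Fin d → ℝ) (hx : x ∈ cube a) :
    Real.exp (-(Real.pi * d)) ≤ auxG a x := by
  unfold auxG
  apply Real.exp_le_exp.2
  have hp := Real.pi_pos
  have : ∑ i, (x i - a i) ^ 2 ≤ ∑ _i : Fin d, (1 : ℝ) := by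
    refine Finset.sum_le_sum fun i _ => ?_
    have h := hx i (Set.mem_univ i)
    simp only [Set.mem_Ico] at h
    nlinarith
  simp at this
  nlinarith

theorem aux_cube_diff {d : ℕ} {a : Fin d → ℤ} {x : Fin d → ℝ} (hx : x ∈ cube a) (i : Fin d) :
    |(auxC a - x) i| ≤ 1 := by
  have h := hx i (Set.mem_univ i)
  simp only [Set.mem_Ico] at h
  simp only [Pi.sub_apply, auxC]
  rw [abs_le]
  constructor <;> linarith

theorem aux_upper {d : ℕ} (p : ℝ) {ϑ₁ : (Fin d → ℝ) → ℝ} (h1 : IsBeurling ϑ₁) :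
    ∃ K : ℝ≥0∞, K < ⊤ ∧ ∀ a : Fin d → ℤ,
      amalgamNorm p 1 ϑ₁ (fun x => (((ϑ₁ (auxC a))⁻¹ : ℝ) : ℂ) * (auxG a x : ℂ)) ≤ K := by
  obtain ⟨A, B, hA, hB, hb⟩ := aux_bound h1
  refine ⟨(ENNReal.ofReal (A * Real.exp ((B + 1) ^ 2 + 1) ^ d) ^ (1 : ℝ) * auxS ^ d) ^ (1 / (1 : ℝ)),
    ?_, fun a => ?_⟩
  · simp only [ENNReal.rpow_one, div_one]
    exact ENNReal.mul_lt_top ENNReal.ofReal_lt_top (ENNReal.pow_lt_top auxS_lt_top)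
  · refine aux_amalgam p 1 le_rfl _ _ _ (by positivity) a fun α x hx => ?_
    refine le_trans ?_ (aux_pointwise A B hA.le a α x hx)
    have hpos : 0 < ϑ₁ (auxC a) := by linarith [h1.2.1 (auxC a)]
    have hpos' : 0 < ϑ₁ x := by linarith [h1.2.1 x]
    rw [norm_smul, norm_mul, Complex.norm_real, Complex.norm_real, Real.norm_of_nonneg hpos'.le,
      Real.norm_of_nonneg (inv_nonneg.2 hpos.le), Real.norm_of_nonneg (aux_G_pos a x).le, ← mul_assoc]
    refine mul_le_mul_of_nonneg_right ?_ (aux_G_pos a x).le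
    rw [← div_eq_mul_inv, div_le_iff₀ hpos]
    have h := h1.2.2 (x - auxC a) (auxC a)
    rw [sub_add_cancel] at h
    exact h.trans (mul_le_mul_of_nonneg_right (hb _) hpos.le)

theorem aux_upper_fourier {d : ℕ} (q r : ℝ) (hr : 1 < r) {ϑ₂ : (Fin d → ℝ) → ℝ}
    (h2 : IsBeurling ϑ₂) :
    ∃ K : ℝ≥0∞, K < ⊤ ∧ ∀ (a : Fin d → ℤ) (c : ℝ), |c| ≤ 1 →
      amalgamNorm q r ϑ₂ (fourierT (fun x => (c : ℂ) * (auxG a x : ℂ))) ≤ K := by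
  obtain ⟨A, B, hA, hB, hb⟩ := aux_bound h2
  refine ⟨(ENNReal.ofReal (A * Real.exp ((B + 1) ^ 2 + 1) ^ d) ^ r * auxS ^ d) ^ (1 / r),
    ?_, fun a c hc => ?_⟩
  · exact ENNReal.rpow_lt_top_of_nonneg (by positivity) (ENNReal.mul_lt_top
      (ENNReal.rpow_lt_top_of_nonneg (by linarith) ENNReal.ofReal_ne_top)
      (ENNReal.pow_lt_top auxS_lt_top)).ne
  · refine aux_amalgam q r hr.le _ _ _ (by positivity) 0 fun α x hx => ?_
    refine le_trans ?_ (aux_pointwise A B hA.le 0 α x hx)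
    have hpos' : 0 < ϑ₂ x := by linarith [h2.2.1 x]
    rw [norm_smul, aux_fourier_norm, Real.norm_of_nonneg hpos'.le]
    refine mul_le_mul ?_ ?_ (mul_nonneg (abs_nonneg _) (aux_G_pos _ _).le) (by positivity)
    · simpa using hb x
    · exact mul_le_of_le_one_left (aux_G_pos _ _).le hc

/-- if `ϑ ≺ ϑ₁` and `ϑ/ϑ₁` does not tend to zero at infinity, then
`A^{p,1,q,r}_{ϑ₁,ϑ₂}(ℝ^d) ⊆ (L^p_ϑ, ℓ¹)` and this inclusion is never compact. -/
theorem A_embedding_never_compact {d : ℕ} (p q r : ℝ) (hp : 1 < p) (hq : 1 < q) (hr : 1 < r)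
    (ϑ ϑ₁ ϑ₂ : (Fin d → ℝ) → ℝ)
    (hϑ : IsBeurling ϑ) (h1 : IsBeurling ϑ₁) (h2 : IsBeurling ϑ₂)
    (hprec : Prec ϑ ϑ₁) (hnv : NotVanishingAtInfty (fun x => ϑ x / ϑ₁ x)) :
    (∀ f : (Fin d → ℝ) → ℂ, MemA p q r ϑ₁ ϑ₂ f → MemAmalgam p 1 ϑ f) ∧
    ∃ f : ℕ → (Fin d → ℝ) → ℂ,
      (∀ n, MemA p q r ϑ₁ ϑ₂ (f n)) ∧
      (∃ M : ℝ, ∀ n, ANorm p q r ϑ₁ ϑ₂ (f n) ≤ ENNReal.ofReal M) ∧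
      ¬ ∃ (φ : ℕ → ℕ) (g : (Fin d → ℝ) → ℂ), StrictMono φ ∧ MemAmalgam p 1 ϑ g ∧
          Tendsto (fun k => amalgamNorm p 1 ϑ (fun x => f (φ k) x - g x)) atTop (nhds 0) := by
  constructor
  · rintro f ⟨⟨hm, hf⟩, -⟩
    refine ⟨hm, ?_⟩
    obtain ⟨C, hC, hle⟩ := hprec
    unfold amalgamNorm at hf ⊢
    simp only [ENNReal.rpow_one, div_one] at hf ⊢
    calc _ ≤ ∑' α : Fin d → ℤ, ENNReal.ofReal C * eLpNorm (fun x => ϑ₁ x • f x)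
          (ENNReal.ofReal p) (volume.restrict (cube α)) := by
          refine ENNReal.tsum_le_tsum fun α => ?_
          refine eLpNorm_le_mul_eLpNorm_of_ae_le_mul (Eventually.of_forall fun x => ?_) _
          rw [norm_smul, norm_smul, Real.norm_of_nonneg (by linarith [hϑ.2.1 x]),
            Real.norm_of_nonneg (by linarith [h1.2.1 x]), ← mul_assoc]
          exact mul_le_mul_of_nonneg_right (hle x) (norm_nonneg _)
      _ < ⊤ := by
          rw [ENNReal.tsum_mul_left]
          exact ENNReal.mul_lt_top ENNReal.ofReal_lt_top hf
  obtain ⟨δ, hδ, hinf⟩ := aux_infinite hϑ h1 hnv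
  obtain ⟨M, hM, hMb⟩ := aux_unit hϑ
  obtain ⟨K, hK, hKb⟩ := aux_upper p h1
  obtain ⟨K2, hK2, hK2b⟩ := aux_upper_fourier q r hr h2
  let e := hinf.natEmbedding
  let a : ℕ → Fin d → ℤ := fun n => (e n).1
  have ha : Function.Injective a := fun m n h => e.injective (Subtype.ext h)
  have haδ : ∀ n, δ * ϑ₁ (auxC (a n)) ≤ ϑ (auxC (a n)) := fun n => (e n).2
  let f : ℕ → (Fin d → ℝ) → ℂ :=
    fun n x => (((ϑ₁ (auxC (a n)))⁻¹ : ℝ) : ℂ) * (auxG (a n) x : ℂ)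
  have hc : ∀ n, |(ϑ₁ (auxC (a n)))⁻¹| ≤ 1 := fun n => by
    rw [abs_of_nonneg (inv_nonneg.2 (by linarith [h1.2.1 (auxC (a n))]))]
    exact inv_le_one_of_one_le₀ (h1.2.1 _)
  refine ⟨f, fun n => ⟨⟨aux_G_meas _ _, (hKb _).trans_lt hK⟩,
    ⟨aux_fourier_meas _ _, (hK2b _ _ (hc n)).trans_lt hK2⟩⟩, ⟨(K + K2).toReal, fun n => ?_⟩, ?_⟩
  · rw [ENNReal.ofReal_toReal (ENNReal.add_lt_top.2 ⟨hK, hK2⟩).ne]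
    exact add_le_add (hKb _) (hK2b _ _ (hc n))
  rintro ⟨φ, g, hφ, ⟨hgm, hg⟩, hlim⟩
  unfold amalgamNorm at hg hlim
  simp only [ENNReal.rpow_one, div_one] at hg hlim
  have hg0 := (ENNReal.tendsto_cofinite_zero_of_tsum_ne_top hg.ne).comp
    (ha.comp hφ.injective).tendsto_cofinite
  rw [Nat.cofinite_eq_atTop] at hg0
  have hsum := hlim.add hg0
  rw [add_zero] at hsum
  set c : ℝ := δ / M * Real.exp (-(Real.pi * d)) with hcdef
  have hcpos : 0 < c := by positivity
  have hlow : ∀ k, ENNReal.ofReal c ≤ (∑' α : Fin d → ℤ, eLpNorm (fun x => ϑ x • (f (φ k) x - g x))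
      (ENNReal.ofReal p) (volume.restrict (cube α))) +
      eLpNorm (fun x => ϑ x • g x) (ENNReal.ofReal p) (volume.restrict (cube (a (φ k)))) := by
    intro k
    set b := a (φ k) with hb
    have hp0 : ENNReal.ofReal p ≠ 0 := by
      simp only [ne_eq, ENNReal.ofReal_eq_zero, not_le]
      linarith
    have hμ : volume.restrict (cube b) ≠ 0 := by
      intro h0
      have : volume.restrict (cube b) Set.univ = 0 := by rw [h0]; simp
      rw [Measure.restrict_apply_univ, aux_volume_cube] at this
      exact one_ne_zero this
    have s1 : ENNReal.ofReal c ≤ eLpNorm (fun x => ϑ x • f (φ k) x) (ENNReal.ofReal p)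
        (volume.restrict (cube b)) := by
      have h := eLpNorm_const (μ := volume.restrict (cube b)) (p := ENNReal.ofReal p) c hp0 hμ
      rw [Measure.restrict_apply_univ, aux_volume_cube, ENNReal.one_rpow, mul_one,
        Real.enorm_of_nonneg hcpos.le] at h
      rw [← h]
      refine eLpNorm_mono_ae ((ae_restrict_mem (aux_measurableSet_cube b)).mono fun x hx => ?_)
      have hpos : 0 < ϑ₁ (auxC b) := by linarith [h1.2.1 (auxC b)]
      have hpos' : 0 < ϑ x := by linarith [hϑ.2.1 x]
      simp only [f]
      rw [Real.norm_of_nonneg hcpos.le, norm_smul, norm_mul (_ : ℂ), Complex.norm_real,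
        Complex.norm_real, Real.norm_of_nonneg hpos'.le, Real.norm_of_nonneg (inv_nonneg.2 hpos.le), Real.norm_of_nonneg (aux_G_pos _ x).le,
        ← mul_assoc]
      refine mul_le_mul ?_ (aux_G_lower b x hx) (Real.exp_pos _).le (by positivity)
      rw [← div_eq_mul_inv, div_le_div_iff₀ hM hpos]
      refine (haδ _).trans ?_
      have h3 := hϑ.2.2 x (auxC b - x)
      rw [add_sub_cancel] at h3
      exact h3.trans (mul_le_mul_of_nonneg_left (hMb _ (aux_cube_diff hx)) hpos'.le)
    have hfm : Measurable (f (φ k)) := aux_G_meas _ _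
    have s2 : eLpNorm (fun x => ϑ x • f (φ k) x) (ENNReal.ofReal p) (volume.restrict (cube b)) ≤
        eLpNorm (fun x => ϑ x • (f (φ k) x - g x)) (ENNReal.ofReal p) (volume.restrict (cube b)) +
        eLpNorm (fun x => ϑ x • g x) (ENNReal.ofReal p) (volume.restrict (cube b)) := by
      have heq : (fun x => ϑ x • f (φ k) x) =
          (fun x => ϑ x • (f (φ k) x - g x)) + (fun x => ϑ x • g x) := by
        ext x
        simp only [Pi.add_apply, ← smul_add, sub_add_cancel]
      rw [heq]
      refine eLpNorm_add_le ?_ ?_ ?_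
      · exact (hϑ.1.smul (hfm.sub hgm)).aestronglyMeasurable
      · exact (hϑ.1.smul hgm).aestronglyMeasurable
      · rw [← ENNReal.ofReal_one]
        exact ENNReal.ofReal_le_ofReal hp.le
    refine (s1.trans s2).trans ?_
    gcongr
    exact ENNReal.le_tsum (f := fun α : Fin d → ℤ => eLpNorm (fun x => ϑ x • (f (φ k) x - g x))
      (ENNReal.ofReal p) (volume.restrict (cube α))) b
  have := ge_of_tendsto' hsum hlow
  simp only [nonpos_iff_eq_zero, ENNReal.ofReal_eq_zero] at this
  linarith
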